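/- Let d ≥ 1 and let n : ℝ^d → ℝ be a C^∞ ℤ^d-periodic function with n(x) > 0 for every x. Then ∫_{T^d} n ∇( Δ√n / √n ) · ∇(log n) dx = − (1/2) ∫_{T^d} n Σ_{i,j} ( ∂_i ∂_j (log n) )² dx; that is, the quantum term tested against ∇ log n produces minus one half of ∫_{T^d} n |∇² log n|² dx. -/

import Mathlib

open MeasureTheory

/-- The `i`-th partial derivative of `f : ℝ^d → ℝ`. -/
noncomputable def pd {d : ℕ} (i : Fin d) (f : (Fin d → ℝ) → ℝ) (x : Fin d → ℝ) : ℝ :=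
  fderiv ℝ f x (Pi.single i 1)

/-!
For `n > 0` the derivatives of `√n` and of `n` are `√n` and `n` times those of `½ log n` and of
`log n`. This gives `Δ√n / √n = ½ Δ log n + ¼ |∇ log n|²`, and one more derivative yields Bohm's
identity `n ∇(Δ√n / √n) = ½ div (n ∇² log n)`. Testing it against `∇ log n` and integrating by
parts over the unit cube, where the boundary terms cancel by periodicity, moves the divergence onto
`∇ log n` and produces `-½ ∫ n |∇² log n|²`.
-/

section PartialDerivative

variable {d : ℕ} {f g : (Fin d → ℝ) → ℝ} {x : Fin d → ℝ}

theorem pd_add (i : Fin d) (hf : DifferentiableAt ℝ f x) (hg : DifferentiableAt ℝ g x) :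
    pd i (fun y => f y + g y) x = pd i f x + pd i g x := by
  simp [pd, fderiv_fun_add hf hg]

theorem pd_sum {ι : Type*} (s : Finset ι) {F : ι → (Fin d → ℝ) → ℝ} (i : Fin d)
    (hF : ∀ k ∈ s, DifferentiableAt ℝ (F k) x) :
    pd i (fun y => ∑ k ∈ s, F k y) x = ∑ k ∈ s, pd i (F k) x := by
  simp [pd, fderiv_fun_sum hF]

theorem pd_mul (i : Fin d) (hf : DifferentiableAt ℝ f x) (hg : DifferentiableAt ℝ g x) :
    pd i (fun y => f y * g y) x = pd i f x * g x + f x * pd i g x := by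
  simp only [pd, fderiv_fun_mul hf hg, add_apply, smul_apply, smul_eq_mul]
  ring

theorem pd_const_mul (i : Fin d) (c : ℝ) (hf : DifferentiableAt ℝ f x) :
    pd i (fun y => c * f y) x = c * pd i f x := by
  simp [pd, fderiv_const_mul hf]

theorem pd_sq (i : Fin d) (hf : DifferentiableAt ℝ f x) :
    pd i (fun y => f y ^ 2) x = 2 * f x * pd i f x := by
  simp [pd, fderiv_fun_pow 2 hf]

theorem pd_eq_mul_pd_log (i : Fin d) (hf : DifferentiableAt ℝ f x) (hx : f x ≠ 0) :
    pd i f x = f x * pd i (fun y => Real.log (f y)) x := by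
  simp [pd, fderiv.log hf hx, hx]

theorem contDiff_pd {m n : WithTop ℕ∞} (i : Fin d) (hf : ContDiff ℝ n f) (hmn : m + 1 ≤ n) :
    ContDiff ℝ m (pd i f) :=
  (hf.fderiv_right hmn).clm_apply contDiff_const

theorem pd_comm (i j : Fin d) (hf : ContDiffAt ℝ 2 f x) : pd i (pd j f) x = pd j (pd i f) x := by
  have hdiff : DifferentiableAt ℝ (fderiv ℝ f) x :=
    (hf.fderiv_right (m := 1) (by norm_num)).differentiableAt one_ne_zero
  have pd_pd_eq (a b : Fin d) :
      pd a (pd b f) x = fderiv ℝ (fderiv ℝ f) x (Pi.single a 1) (Pi.single b 1) := by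
    unfold pd
    simp [fderiv_clm_apply hdiff (differentiableAt_const _)]
  have hsymm : IsSymmSndFDerivAt ℝ f x := hf.isSymmSndFDerivAt (by simp)
  rw [pd_pd_eq, pd_pd_eq, hsymm.eq]

theorem periodic_pd {c : Fin d → ℝ} (i : Fin d) (hf : Function.Periodic f c) :
    Function.Periodic (pd i f) c := fun x => by
  simp only [pd, ← fderiv_comp_add_right, hf _]

end PartialDerivative

section UnitCube

variable {d : ℕ} {F : Fin d → (Fin d → ℝ) → ℝ} {g : (Fin d → ℝ) → ℝ}

theorem integral_divergence_eq_zero (hF : ∀ j, ContDiff ℝ 1 (F j))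
    (hper : ∀ j, Function.Periodic (F j) (Pi.single j 1)) :
    ∫ x in Set.Icc (0 : Fin d → ℝ) 1, ∑ j, pd j (F j) x = 0 := by
  cases d with
  | zero => simp
  | succ m =>
    have faces_eq (j : Fin (m + 1)) (y : Fin m → ℝ) :
        F j (j.insertNth 1 y) = F j (j.insertNth 0 y) := by
      rw [← hper j (j.insertNth 0 y)]
      congr 1
      ext k
      refine Fin.succAboveCases j ?_ (fun l => ?_) k <;> simp
    have hint : IntegrableOn (fun x => ∑ j, pd j (F j) x) (Set.Icc (0 : Fin (m + 1) → ℝ) 1) :=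
      (continuous_finsetSum _ fun j _ =>
        (contDiff_pd (m := 0) j (hF j) (by simp)).continuous).integrableOn_Icc
    have hdiv := integral_divergence_of_hasFDerivAt_off_countable' (0 : Fin (m + 1) → ℝ) 1
      zero_le_one F (fun j => fderiv ℝ (F j)) ∅ Set.countable_empty
      (fun j => (hF j).continuous.continuousOn)
      (fun x _ j => ((hF j).differentiable one_ne_zero x).hasFDerivAt) hint
    simpa [pd, faces_eq] using hdiv

theorem integral_divergence_mul (hF : ∀ j, ContDiff ℝ 1 (F j)) (hg : ContDiff ℝ 1 g)
    (hFper : ∀ j, Function.Periodic (F j) (Pi.single j 1))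
    (hgper : ∀ j, Function.Periodic g (Pi.single j 1)) :
    ∫ x in Set.Icc (0 : Fin d → ℝ) 1, (∑ j, pd j (F j) x) * g x
      = -∫ x in Set.Icc (0 : Fin d → ℝ) 1, ∑ j, F j x * pd j g x := by
  have continuous_pd {f : (Fin d → ℝ) → ℝ} (hf : ContDiff ℝ 1 f) (j : Fin d) :
      Continuous (pd j f) := (contDiff_pd (m := 0) j hf (by simp)).continuous
  have product_rule (x : Fin d → ℝ) : ∑ j, pd j (fun y => F j y * g y) x
      = (∑ j, pd j (F j) x) * g x + ∑ j, F j x * pd j g x := by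
    rw [Finset.sum_mul, ← Finset.sum_add_distrib]
    exact Finset.sum_congr rfl fun j _ =>
      pd_mul j ((hF j).differentiable one_ne_zero x) (hg.differentiable one_ne_zero x)
  have hzero := integral_divergence_eq_zero (fun j => (hF j).mul hg)
    (fun j => (hFper j).mul (hgper j))
  simp only [product_rule] at hzero
  rw [integral_add] at hzero
  · exact eq_neg_of_add_eq_zero_left hzero
  · exact ((continuous_finsetSum _ fun j _ => continuous_pd (hF j) j).mul
      hg.continuous).integrableOn_Icc
  · exact (continuous_finsetSum _ fun j _ =>
      (hF j).continuous.mul (continuous_pd hg j)).integrableOn_Icc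

end UnitCube

section BohmPotential

variable {d : ℕ} {f n : (Fin d → ℝ) → ℝ}

/-- The quantum (Bohm) potential `Δ√n / √n` of a density `n`, without the physical prefactor.
It is meaningful only where `n` is positive. -/
noncomputable def bohmPotential (n : (Fin d → ℝ) → ℝ) (x : Fin d → ℝ) : ℝ :=
  (∑ j, pd j (pd j (fun y => Real.sqrt (n y))) x) / Real.sqrt (n x)

theorem pd_pd_eq_mul_pd_log (i j : Fin d) (hf : ContDiff ℝ 2 f) (hne : ∀ x, f x ≠ 0)
    (x : Fin d → ℝ) :
    pd i (pd j f) x = f x * (pd i (pd j fun y => Real.log (f y)) x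
      + pd i (fun y => Real.log (f y)) x * pd j (fun y => Real.log (f y)) x) := by
  have hdiff : Differentiable ℝ f := hf.differentiable two_ne_zero
  have hlog : Differentiable ℝ (pd j fun y => Real.log (f y)) :=
    (contDiff_pd (m := 1) j (hf.log hne) (by norm_num)).differentiable one_ne_zero
  have hpd : pd j f = fun y => f y * pd j (fun z => Real.log (f z)) y :=
    funext fun y => pd_eq_mul_pd_log j (hdiff y) (hne y)
  rw [hpd, pd_mul i (hdiff x) (hlog x), pd_eq_mul_pd_log i (hdiff x) (hne x)]
  ring

theorem bohmPotential_eq_sum_pd_log (hn : ContDiff ℝ 2 n) (hpos : ∀ x, 0 < n x)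
    (x : Fin d → ℝ) :
    bohmPotential n x = ∑ j, (1 / 2 * pd j (pd j fun y => Real.log (n y)) x
      + 1 / 4 * pd j (fun y => Real.log (n y)) x ^ 2) := by
  have hlog : ContDiff ℝ 2 fun y => Real.log (n y) := hn.log fun y => (hpos y).ne'
  have sqrt_ne_zero (y : Fin d → ℝ) : Real.sqrt (n y) ≠ 0 := (Real.sqrt_pos.2 (hpos y)).ne'
  have log_sqrt : (fun y => Real.log (Real.sqrt (n y))) = fun y => 1 / 2 * Real.log (n y) := by
    ext y
    rw [Real.log_sqrt (hpos y).le]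
    ring
  have pd_log_sqrt (j : Fin d) : pd j (fun y => Real.log (Real.sqrt (n y)))
      = fun y => 1 / 2 * pd j (fun z => Real.log (n z)) y := by
    ext y
    rw [log_sqrt, pd_const_mul j _ (hlog.differentiable two_ne_zero y)]
  rw [bohmPotential, Finset.sum_div]
  refine Finset.sum_congr rfl fun j _ => ?_
  have hpdlog : Differentiable ℝ (pd j fun y => Real.log (n y)) :=
    (contDiff_pd (m := 1) j hlog (by norm_num)).differentiable one_ne_zero
  rw [pd_pd_eq_mul_pd_log j j (hn.sqrt fun y => (hpos y).ne') sqrt_ne_zero,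
    mul_div_cancel_left₀ _ (sqrt_ne_zero x), pd_log_sqrt, pd_const_mul j _ (hpdlog x)]
  ring

theorem contDiff_bohmPotential {m k : WithTop ℕ∞} (hn : ContDiff ℝ k n) (hpos : ∀ x, 0 < n x)
    (hmk : m + 1 + 1 ≤ k) : ContDiff ℝ m (bohmPotential n) := by
  have hsqrt : ContDiff ℝ k fun y => Real.sqrt (n y) := hn.sqrt fun y => (hpos y).ne'
  have hmk' : m ≤ k := le_self_add.trans (le_self_add.trans hmk)
  exact (ContDiff.sum fun j _ => contDiff_pd j (contDiff_pd j hsqrt hmk) le_rfl).div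
    (hsqrt.of_le hmk') fun y => (Real.sqrt_pos.2 (hpos y)).ne'

theorem pd_bohmPotential (i : Fin d) (hn : ContDiff ℝ 3 n) (hpos : ∀ x, 0 < n x)
    (x : Fin d → ℝ) :
    pd i (bohmPotential n) x = 1 / 2 * ∑ j, (pd i (pd j (pd j fun y => Real.log (n y))) x
      + pd j (fun y => Real.log (n y)) x * pd i (pd j fun y => Real.log (n y)) x) := by
  have hlog : ContDiff ℝ 3 fun y => Real.log (n y) := hn.log fun y => (hpos y).ne'
  have hpd (j : Fin d) : ContDiff ℝ 2 (pd j fun y => Real.log (n y)) :=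
    contDiff_pd j hlog (by norm_num)
  have hpd_diff (j : Fin d) := (hpd j).differentiable two_ne_zero x
  have hpd_pd_diff (j : Fin d) : DifferentiableAt ℝ (pd j (pd j fun y => Real.log (n y))) x :=
    (contDiff_pd (m := 1) j (hpd j) (by norm_num)).differentiable one_ne_zero x
  have hlin (j : Fin d) := (hpd_pd_diff j).const_mul (1 / 2)
  have hquad (j : Fin d) := ((hpd_diff j).fun_pow 2).const_mul (1 / 4)
  rw [funext (bohmPotential_eq_sum_pd_log (hn.of_le (by norm_num)) hpos),
    pd_sum _ _ fun j _ => (hlin j).fun_add (hquad j), Finset.mul_sum]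
  refine Finset.sum_congr rfl fun j _ => ?_
  rw [pd_add i (hlin j) (hquad j), pd_const_mul i _ (hpd_pd_diff j),
    pd_const_mul i _ ((hpd_diff j).fun_pow 2), pd_sq i (hpd_diff j)]
  ring

theorem mul_pd_bohmPotential (i : Fin d) (hn : ContDiff ℝ 3 n) (hpos : ∀ x, 0 < n x)
    (x : Fin d → ℝ) :
    n x * pd i (bohmPotential n) x
      = 1 / 2 * ∑ j, pd j (fun y => n y * pd i (pd j fun z => Real.log (n z)) y) x := by
  have hn_diff : DifferentiableAt ℝ n x := hn.differentiable three_ne_zero x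
  have hpd (j : Fin d) : ContDiff ℝ 2 (pd j fun y => Real.log (n y)) :=
    contDiff_pd j (hn.log fun y => (hpos y).ne') (by norm_num)
  have hpd_pd_diff (j : Fin d) : DifferentiableAt ℝ (pd i (pd j fun y => Real.log (n y))) x :=
    (contDiff_pd (m := 1) i (hpd j) (by norm_num)).differentiable one_ne_zero x
  rw [pd_bohmPotential i hn hpos, mul_left_comm, Finset.mul_sum]
  congr 1
  refine Finset.sum_congr rfl fun j _ => ?_
  rw [pd_mul j hn_diff (hpd_pd_diff j), pd_eq_mul_pd_log j hn_diff (hpos x).ne',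
    pd_comm j i (hpd j).contDiffAt]
  ring

theorem integral_mul_pd_bohmPotential_mul_pd_log (i : Fin d) (hn : ContDiff ℝ 3 n)
    (hpos : ∀ x, 0 < n x) (hper : ∀ j, Function.Periodic n (Pi.single j 1)) :
    ∫ x in Set.Icc (0 : Fin d → ℝ) 1,
        n x * pd i (bohmPotential n) x * pd i (fun y => Real.log (n y)) x
      = -(1 / 2) * ∫ x in Set.Icc (0 : Fin d → ℝ) 1,
          n x * ∑ j, pd i (pd j fun y => Real.log (n y)) x ^ 2 := by
  have hlog : ContDiff ℝ 3 fun y => Real.log (n y) := hn.log fun y => (hpos y).ne'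
  have hpd (j : Fin d) : ContDiff ℝ 2 (pd j fun y => Real.log (n y)) :=
    contDiff_pd j hlog (by norm_num)
  have hlog_per (j : Fin d) : Function.Periodic (fun y => Real.log (n y)) (Pi.single j 1) :=
    (hper j).comp Real.log
  have parts := integral_divergence_mul
    (F := fun j y => n y * pd i (pd j fun z => Real.log (n z)) y)
    (fun j => (hn.of_le (by norm_num)).mul (contDiff_pd i (hpd j) (by norm_num)))
    ((hpd i).of_le (by norm_num))
    (fun j => (hper j).mul (periodic_pd i (periodic_pd j (hlog_per j))))
    (fun j => periodic_pd i (hlog_per j))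
  simp only [mul_pd_bohmPotential i hn hpos, mul_assoc, integral_const_mul] at parts ⊢
  rw [parts, neg_mul, mul_neg]
  have hess_symm (j : Fin d) (x : Fin d → ℝ) : pd j (pd i fun y => Real.log (n y)) x
      = pd i (pd j fun y => Real.log (n y)) x :=
    pd_comm j i (hlog.of_le (by norm_num)).contDiffAt
  simp only [hess_symm, Finset.mul_sum, sq]

theorem quantum_term_against_grad_log_general (hn : ContDiff ℝ 3 n) (hpos : ∀ x, 0 < n x)
    (hper : ∀ j, Function.Periodic n (Pi.single j 1)) :
    ∫ x in Set.Icc (0 : Fin d → ℝ) 1,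
        ∑ i, n x * pd i (bohmPotential n) x * pd i (fun y => Real.log (n y)) x
      = -(1 / 2) * ∫ x in Set.Icc (0 : Fin d → ℝ) 1,
          n x * ∑ i, ∑ j, pd i (pd j fun y => Real.log (n y)) x ^ 2 := by
  have hlog : ContDiff ℝ 3 fun y => Real.log (n y) := hn.log fun y => (hpos y).ne'
  have hpd (i : Fin d) : ContDiff ℝ 2 (pd i fun y => Real.log (n y)) :=
    contDiff_pd i hlog (by norm_num)
  have grad_bohm_continuous (i : Fin d) : Continuous (pd i (bohmPotential n)) :=
    (contDiff_pd (m := 0) i (contDiff_bohmPotential (m := 1) hn hpos (by norm_num))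
      (by norm_num)).continuous
  have hess_log_continuous (i j : Fin d) : Continuous (pd i (pd j fun y => Real.log (n y))) :=
    (contDiff_pd (m := 1) i (hpd j) (by norm_num)).continuous
  have mul_hess_sq (x : Fin d → ℝ) :
      n x * ∑ i, ∑ j, pd i (pd j fun y => Real.log (n y)) x ^ 2
        = ∑ i, n x * ∑ j, pd i (pd j fun y => Real.log (n y)) x ^ 2 := Finset.mul_sum ..
  simp only [mul_hess_sq]
  rw [integral_finsetSum, integral_finsetSum, Finset.mul_sum]
  · exact Finset.sum_congr rfl fun i _ =>
      integral_mul_pd_bohmPotential_mul_pd_log i hn hpos hper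
  · exact fun i _ => (hn.continuous.mul (continuous_finsetSum _ fun j _ =>
      (hess_log_continuous i j).pow 2)).integrableOn_Icc
  · exact fun i _ => ((hn.continuous.mul (grad_bohm_continuous i)).mul
      (hpd i).continuous).integrableOn_Icc

end BohmPotential

/-- For smooth `ℤ^d`-periodic positive `n`:
`∫_{T^d} n ∇(Δ√n/√n) · ∇ log n = −(1/2) ∫_{T^d} n |∇² log n|²`. -/
theorem quantum_term_against_grad_log (d : ℕ) (hd : 1 ≤ d) (n : (Fin d → ℝ) → ℝ)
    (hn : ContDiff ℝ (⊤ : ℕ∞) n) (hpos : ∀ x, 0 < n x)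
    (hnper : ∀ (z : Fin d → ℤ) (x : Fin d → ℝ), n (x + fun i => (z i : ℝ)) = n x) :
    (∫ x in Set.Icc (0 : Fin d → ℝ) 1, ∑ i : Fin d,
        n x * pd i (fun y =>
          (∑ j : Fin d, pd j (pd j (fun z => Real.sqrt (n z))) y) / Real.sqrt (n y)) x
          * pd i (fun y => Real.log (n y)) x)
      = -(1/2) * ∫ x in Set.Icc (0 : Fin d → ℝ) 1,
          n x * ∑ i : Fin d, ∑ j : Fin d,
            (pd i (pd j (fun y => Real.log (n y))) x) ^ 2 :=
  quantum_term_against_grad_log_general (contDiff_infty.1 hn 3) hpos fun j x => by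
    convert hnper (Pi.single j 1) x with k
    simp [Pi.single_apply]
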